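/- For γ ∈ ℝ, let W_γ : SL(2) → ℝ be the restricted Alibert–Dacorogna–Marcellini energy W_γ(F) = ‖F‖⁴ − 2γ·‖F‖². Then W_γ is rank-one convex on SL(2) if and only if γ ≤ 2. -/

import Mathlib

/-!
On SL(2) one has `‖F‖² - 2 = ‖F‖² - 2 det F = (F₀₀ - F₁₁)² + (F₀₁ + F₁₀)² ≥ 0`. A rank-one segment
with endpoints in SL(2) stays in SL(2), because `det` is affine along it. So `p = ‖·‖² - 2` is a
nonnegative convex function on the segment, and so is `p²`. Since
`W_γ = p² + (4 - 2γ) p + 4 - 4γ`, the energy is convex on the segment when `γ ≤ 2`.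

For the converse, along the simple shear `s ↦ !![1, s; 0, 1]` the energy is
`s⁴ + (4 - 2γ) s² + 4 - 4γ`; if `γ > 2`, midpoint convexity fails between `-s` and `s` for
`s² = γ - 2`.
-/

/-- The squared Frobenius norm of a real 2×2 matrix. -/
noncomputable def frobSq (F : Matrix (Fin 2) (Fin 2) ℝ) : ℝ := ∑ i, ∑ j, (F i j) ^ 2

/-- Rank-one convexity of a function on SL(2). -/
def RankOneConvexOnSL2 (w : Matrix (Fin 2) (Fin 2) ℝ → ℝ) : Prop :=
  ∀ F H : Matrix (Fin 2) (Fin 2) ℝ, H.rank = 1 → F.det = 1 → (F + H).det = 1 →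
    ∀ t ∈ Set.Icc (0 : ℝ) 1, w (F + t • H) ≤ (1 - t) * w F + t * w (F + H)

lemma frobSq_eq (F : Matrix (Fin 2) (Fin 2) ℝ) :
    frobSq F = F 0 0 ^ 2 + F 0 1 ^ 2 + F 1 0 ^ 2 + F 1 1 ^ 2 := by
  simp only [frobSq, Fin.sum_univ_two]
  ring

lemma two_le_frobSq {F : Matrix (Fin 2) (Fin 2) ℝ} (hF : F.det = 1) : 2 ≤ frobSq F := by
  rw [Matrix.det_fin_two] at hF
  rw [frobSq_eq]
  nlinarith [sq_nonneg (F 0 0 - F 1 1), sq_nonneg (F 0 1 + F 1 0)]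

lemma det_eq_zero_of_rank_eq_one {H : Matrix (Fin 2) (Fin 2) ℝ} (hH : H.rank = 1) :
    H.det = 0 := by
  by_contra h
  have h2 := Matrix.rank_of_isUnit H ((Matrix.isUnit_iff_isUnit_det H).2 (isUnit_iff_ne_zero.2 h))
  simp [hH] at h2

lemma det_add_smul_eq_one {F H : Matrix (Fin 2) (Fin 2) ℝ} (hH : H.rank = 1) (hF : F.det = 1)
    (hFH : (F + H).det = 1) (t : ℝ) : (F + t • H).det = 1 := by
  have hd := det_eq_zero_of_rank_eq_one hH
  simp only [Matrix.det_fin_two, Matrix.add_apply, Matrix.smul_apply, smul_eq_mul] at *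
  linear_combination (1 - t) * hF + t * hFH + (t ^ 2 - t) * hd

lemma frobSq_add_smul (F H : Matrix (Fin 2) (Fin 2) ℝ) (t : ℝ) :
    frobSq (F + t • H) =
      (1 - t) * frobSq F + t * frobSq (F + H) - t * (1 - t) * frobSq H := by
  simp only [frobSq_eq, Matrix.add_apply, Matrix.smul_apply, smul_eq_mul]
  ring

lemma rank_shear {s : ℝ} (hs : s ≠ 0) : (!![0, s; 0, 0] : Matrix (Fin 2) (Fin 2) ℝ).rank = 1 := by
  have h : (!![0, s; 0, 0] : Matrix (Fin 2) (Fin 2) ℝ) = Matrix.vecMulVec ![s, 0] ![0, 1] := by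
    ext i j
    fin_cases i <;> fin_cases j <;> simp [Matrix.vecMulVec_apply]
  apply le_antisymm
  · rw [h]
    exact Matrix.rank_vecMulVec_le _ _
  · rw [Nat.one_le_iff_ne_zero]
    intro h0
    rw [Matrix.rank, Submodule.finrank_eq_zero, LinearMap.range_eq_bot] at h0
    have h1 := congrFun (LinearMap.congr_fun h0 ![0, 1]) 0
    exact hs (by simpa [Matrix.mulVec, dotProduct] using h1)

/-- The restricted Alibert–Dacorogna–Marcellini energy `W_γ(F) = ‖F‖⁴ − 2γ‖F‖²` is
rank-one convex on SL(2) if and only if `γ ≤ 2`. -/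
theorem ADM_rankOneConvex_iff (γ : ℝ) :
    RankOneConvexOnSL2 (fun F => (frobSq F) ^ 2 - 2 * γ * frobSq F) ↔ γ ≤ 2 := by
  constructor
  · intro hconv
    by_contra! hγ
    obtain ⟨s, hs, hsq⟩ : ∃ s : ℝ, 0 < s ∧ s ^ 2 = γ - 2 :=
      ⟨√(γ - 2), Real.sqrt_pos.2 (by linarith), Real.sq_sqrt (by linarith)⟩
    have h := hconv !![1, -s; 0, 1] !![0, 2 * s; 0, 0] (rank_shear (by positivity))
      (by simp [Matrix.det_fin_two]) (by simp [Matrix.det_fin_two]) (1 / 2) (by norm_num)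
    simp only [frobSq_eq, Matrix.add_apply, Matrix.smul_apply, smul_eq_mul, Matrix.of_apply,
      Matrix.cons_val', Matrix.cons_val_zero, Matrix.cons_val_one, Matrix.cons_val_fin_one] at h
    ring_nf at h
    have h4 : s ^ 4 = (γ - 2) ^ 2 := by rw [← hsq]; ring
    rw [h4, hsq] at h
    nlinarith [sq_pos_of_pos (sub_pos.2 hγ)]
  · rintro hγ F H hH hF hFH t ⟨ht0, ht1⟩
    have hp := two_le_frobSq (det_add_smul_eq_one hH hF hFH t)
    have hc : 0 ≤ t * (1 - t) * frobSq H := by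
      have : 0 ≤ frobSq H := by rw [frobSq_eq]; positivity
      have : 0 ≤ 1 - t := by linarith
      positivity
    have hle : frobSq (F + t • H) ≤ (1 - t) * frobSq F + t * frobSq (F + H) := by
      linarith [frobSq_add_smul F H t]
    dsimp only
    generalize frobSq (F + t • H) = q at *
    generalize frobSq F = a at *
    generalize frobSq (F + H) = b at *
    -- `p²` is convex along the segment, where `p = ‖·‖² - 2`
    have hsq : (q - 2) ^ 2 ≤ (1 - t) * (a - 2) ^ 2 + t * (b - 2) ^ 2 := by
      have h1 : (q - 2) ^ 2 ≤ ((1 - t) * a + t * b - 2) ^ 2 :=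
        pow_le_pow_left₀ (by linarith) (by linarith) 2
      nlinarith [mul_nonneg (mul_nonneg ht0 (sub_nonneg.2 ht1)) (sq_nonneg (a - b))]
    nlinarith [mul_nonneg (sub_nonneg.2 hγ) (sub_nonneg.2 hle)]
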